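/- (Achievability.) For a discrete memoryless channel Q with strictly positive synchronized capacity C(Q) > 0, any asynchronism exponent strictly less than max_{x∈𝒳} D(Q(·|x)||Q(·|⋆)) (interpreted in [0,∞]; in particular every finite exponent if Q(y|⋆) = 0 for some y ∈ 𝒴) is achievable: for every such α and every ε > 0 there exist a constant R' > 0 and, for all sufficiently large N, a codebook with M ≥ e^{R'N} codewords of length N and a sequential decoder (τ,φ) such that, at asynchronism level A = ⌈e^{αN}⌉, the error probability satisfies P(E) ≤ ε. In particular the achieving coding strategy satisfies lim inf_{N→∞} (ln M)/N > 0. -/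

import Mathlib

/-!
The error criterion puts no constraint on the delay, so the decoder may look at the entire output
sequence before deciding. A codeword of length `N = k + n` consists of a prefix `x ⋯ x` of length
`k ≈ (1-δ)N`, where `α < β < D(Q(·|x)‖Q(·|⋆))`, and of a suffix of length `n ≈ δN` drawn i.i.d. from
an input distribution `P` with `I(PQ) > γ > 0`. A message is accepted if at some start time
the prefix window has likelihood ratio (of `x` against `⋆`) above `e^{βk}`, and the suffix window has
information density with the suffix above `γn`.

* At the true start time both tests succeed up to exponentially small probability, by a Chernoff
  bound (`chernoff`, `info_density`). The bound also covers an infinite divergence: the moment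
  generating function of the log-likelihood ratio is then less than `1` near `0`.
* At one of the `≈ e^{αN}` start times whose window avoids the transmitted codeword, the prefix
  window is pure noise and passes with probability at most `e^{-βk}` (`noise_accept`).
* At one of the at most `2N` remaining start times, the suffix of a wrong message is independent of
  the output whatever the overlap, hence passes with probability at most `e^{-γn}` on average over
  the codebook (`random_suffix_accept`). The true message being accepted at a wrong time is harmless.

The union bound over start times and over `M ≈ e^{RN}` messages (`error_le`, `average_error`,
`union_bound`) tends to `0` for small `R > 0`, and some codebook is at least as good as the average
(`exists_code`).
-/

open scoped BigOperators ENNReal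

namespace Async

variable {X : Type*} {Y : Type*}

/-- `μ` is a probability distribution on a finite alphabet. -/
def IsDist {A : Type*} [Fintype A] (μ : A → ℝ) : Prop :=
  (∀ a, 0 ≤ μ a) ∧ ∑ a, μ a = 1

/-- `Q` is a stochastic matrix (discrete memoryless channel). -/
def IsChannel [Fintype X] [Fintype Y] (Q : X → Y → ℝ) : Prop :=
  ∀ x, IsDist (Q x)

open scoped Classical in
/-- Kullback–Leibler divergence `D(μ‖ν)`, valued in `[0,∞]`. -/
noncomputable def klDiv {A : Type*} [Fintype A] (μ ν : A → ℝ) : ℝ≥0∞ :=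
  if ∀ a, ν a = 0 → μ a = 0 then
    ENNReal.ofReal (∑ a, μ a * Real.log (μ a / ν a))
  else ⊤

/-- Real-valued Kullback–Leibler divergence (finite regime). -/
noncomputable def klDivR {A : Type*} [Fintype A] (μ ν : A → ℝ) : ℝ :=
  ∑ a, μ a * Real.log (μ a / ν a)

/-- Left (input) marginal of a joint distribution on `X × Y`. -/
noncomputable def margX [Fintype Y] (V : X × Y → ℝ) : X → ℝ :=
  fun x => ∑ y, V (x, y)

/-- Right (output) marginal of a joint distribution on `X × Y`. -/
noncomputable def margY [Fintype X] (V : X × Y → ℝ) : Y → ℝ :=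
  fun y => ∑ x, V (x, y)

/-- Mutual information `I(V)` of a joint distribution `V` on `X × Y`. -/
noncomputable def mi [Fintype X] [Fintype Y] (V : X × Y → ℝ) : ℝ :=
  ∑ p : X × Y, V p * Real.log (V p / (margX V p.1 * margY V p.2))

/-- The joint distribution `P(x)Q(y|x)` of an input distribution and a channel. -/
noncomputable def joint (P : X → ℝ) (Q : X → Y → ℝ) : X × Y → ℝ :=
  fun p => P p.1 * Q p.1 p.2

/-- Capacity of the synchronized channel: `C(Q) = max_P I(PQ)`. -/
noncomputable def capacity [Fintype X] [Fintype Y] (Q : X → Y → ℝ) : ℝ :=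
  sSup {v : ℝ | ∃ P : X → ℝ, IsDist P ∧ v = mi (joint P Q)}

/-- A sequential decoder: a stopping time `τ` (w.r.t. the natural filtration of the
output sequence, times `1,…,T`) together with an `F_τ`-measurable decision `φ`. -/
structure Decoder (Y : Type*) (T M : ℕ) where
  τ : (Fin T → Y) → ℕ
  φ : (Fin T → Y) → Fin M
  τ_le : ∀ y, τ y ≤ T
  stopping : ∀ y y', (∀ t : Fin T, (t : ℕ) < τ y → y t = y' t) → τ y' = τ y
  meas : ∀ y y', (∀ t : Fin T, (t : ℕ) < τ y → y t = y' t) → φ y' = φ y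

/-- Probability of the output sequence `y` (of length `T`, times `1,…,T`) when the
codeword `c` is transmitted starting at time `l`; noise symbol `star` elsewhere. -/
noncomputable def seqProb (Q : X → Y → ℝ) (star : X) {N T : ℕ}
    (c : Fin N → X) (l : ℕ) (y : Fin T → Y) : ℝ :=
  ∏ t : Fin T,
    Q (if h : l ≤ (t : ℕ) + 1 ∧ (t : ℕ) + 1 < l + N then
        c ⟨(t : ℕ) + 1 - l, by omega⟩ else star) (y t)

/-- Average decoding error probability `P(E)` of a codebook `c` and decoder `dec`
operating at asynchronism level `A`. -/
noncomputable def errProb [Fintype Y] (Q : X → Y → ℝ) (star : X) {N M : ℕ}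
    (c : Fin M → Fin N → X) (A : ℕ) (dec : Decoder Y (A + N - 1) M) : ℝ :=
  (1 / ((A : ℝ) * M)) * ∑ m : Fin M, ∑ l ∈ Finset.Icc 1 A,
    ∑ y : Fin (A + N - 1) → Y, if dec.φ y = m then 0 else seqProb Q star (c m) l y

/-- Expected delay `E(τ-ν)⁺`. -/
noncomputable def expDelay [Fintype Y] (Q : X → Y → ℝ) (star : X) {N M : ℕ}
    (c : Fin M → Fin N → X) (A : ℕ) (dec : Decoder Y (A + N - 1) M) : ℝ :=
  (1 / ((A : ℝ) * M)) * ∑ m : Fin M, ∑ l ∈ Finset.Icc 1 A,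
    ∑ y : Fin (A + N - 1) → Y, seqProb Q star (c m) l y * max ((dec.τ y : ℝ) - l) 0

/-- The asynchronism exponent `α` is achievable at rate `R`: for every `ε > 0` and all
sufficiently large `N` there is a codebook/decoder pair operating at asynchronism level
`A = ⌈e^{(α-ε)N}⌉` with rate at least `R - ε` and error probability at most `ε`. -/
def AchievableAt [Fintype X] [Fintype Y] (Q : X → Y → ℝ) (star : X) (α R : ℝ) : Prop :=
  ∀ ε : ℝ, 0 < ε → ∃ N₀ : ℕ, ∀ N ≥ N₀, ∃ M : ℕ, 2 ≤ M ∧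
    ∃ (c : Fin M → Fin N → X)
      (dec : Decoder Y (⌈Real.exp ((α - ε) * N)⌉₊ + N - 1) M),
      errProb Q star c ⌈Real.exp ((α - ε) * N)⌉₊ dec ≤ ε ∧
      R - ε ≤ Real.log M / expDelay Q star c ⌈Real.exp ((α - ε) * N)⌉₊ dec

/-! ### Sums of products over finite alphabets -/

/-- Marginalisation of a product distribution: the expectation of a function of the coordinates
in the range of an injection `e` only involves the factors with index in that range. -/
lemma sum_marginal {κ ι S : Type*} [Fintype κ] [DecidableEq κ] [Fintype ι] [DecidableEq ι]
    [Fintype S]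
    (f : κ → S → ℝ) (hf : ∀ t, ∑ a, f t a = 1) (e : ι → κ) (he : Function.Injective e)
    (G : (ι → S) → ℝ) :
    ∑ y : κ → S, (∏ t, f t (y t)) * G (fun i => y (e i)) =
      ∑ z : ι → S, (∏ i, f (e i) (z i)) * G z := by
  classical
  let E : ι ⊕ {t // t ∉ Set.range e} ≃ κ :=
    (Equiv.sumCongr (Equiv.ofInjective e he) (Equiv.refl _)).trans
      (Equiv.sumCompl (fun t => t ∈ Set.range e))
  have hE1 : ∀ i, E (Sum.inl i) = e i := fun i => by simp [E]
  rw [← Equiv.sum_comp ((Equiv.sumArrowEquivProdArrow ι {t // t ∉ Set.range e} S).symm.trans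
    (Equiv.arrowCongr E (Equiv.refl S))), Fintype.sum_prod_type]
  refine Finset.sum_congr rfl fun z _ => ?_
  have h : ∀ w : {t // t ∉ Set.range e} → S,
      (∏ t, f t (((Equiv.sumArrowEquivProdArrow ι {t // t ∉ Set.range e} S).symm.trans
        (Equiv.arrowCongr E (Equiv.refl S))) (z, w) t)) *
        G (fun i => ((Equiv.sumArrowEquivProdArrow ι {t // t ∉ Set.range e} S).symm.trans
        (Equiv.arrowCongr E (Equiv.refl S))) (z, w) (e i)) =
      ((∏ i, f (e i) (z i)) * G z) * ∏ j, f (E (Sum.inr j)) (w j) := by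
    intro w
    rw [← Equiv.prod_comp E, Fintype.prod_sum_type]
    have h2 : (fun i => ((Equiv.sumArrowEquivProdArrow ι {t // t ∉ Set.range e} S).symm.trans
        (Equiv.arrowCongr E (Equiv.refl S))) (z, w) (e i)) = z := by
      funext i
      rw [← hE1 i]
      simp [Equiv.arrowCongr, Equiv.sumArrowEquivProdArrow]
    rw [h2]
    simp only [hE1]
    have h3 : ∀ i, ((Equiv.sumArrowEquivProdArrow ι {t // t ∉ Set.range e} S).symm.trans
        (Equiv.arrowCongr E (Equiv.refl S))) (z, w) (e i) = z i := fun i => congrFun h2 i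
    simp only [h3]
    have h4 : ∀ j, ((Equiv.sumArrowEquivProdArrow ι {t // t ∉ Set.range e} S).symm.trans
        (Equiv.arrowCongr E (Equiv.refl S))) (z, w) (E (Sum.inr j)) = w j := fun j => by
      simp [Equiv.arrowCongr, Equiv.sumArrowEquivProdArrow]
    simp only [h4]
    ring
  simp only [h]
  rw [← Finset.mul_sum, ← Fintype.prod_sum (fun j a => f (E (Sum.inr j)) a)]
  simp [hf]

lemma sum_prod_eq_one {κ S : Type*} [Fintype κ] [DecidableEq κ] [Fintype S]
    (f : κ → S → ℝ) (hf : ∀ t, ∑ a, f t a = 1) : ∑ y : κ → S, ∏ t, f t (y t) = 1 := by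
  rw [← Fintype.prod_sum]
  simp [hf]

/-! ### Likelihood-ratio tests -/

/-- Summand of the moment generating function of the log-likelihood ratio `log (μ/ν)`, centred
at `β`, at the point `-s`; it is `0` at symbols where either distribution vanishes, so that for
`s → 0⁺` it also captures an infinite log-likelihood ratio. -/
noncomputable def tilt {S : Type*} (μ ν : S → ℝ) (β s : ℝ) (a : S) : ℝ :=
  if μ a = 0 ∨ ν a = 0 then 0 else μ a * Real.exp (-s * (Real.log (μ a / ν a) - β))

/-- The moment generating function has slope `β - D(μ‖ν) < 0` at `0` if the divergence is finite,
and value less than `1` at `0` if it is infinite. -/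
lemma exists_tilt_lt_one {S : Type*} [Fintype S] (μ ν : S → ℝ) (hμ : IsDist μ)
    (β : ℝ) (hβ : 0 ≤ β) (h : ENNReal.ofReal β < klDiv μ ν) :
    ∃ s : ℝ, 0 < s ∧ ∑ a, tilt μ ν β s a < 1 := by
  classical
  have hder : HasDerivAt (fun s => ∑ a, tilt μ ν β s a)
      (∑ a, if μ a = 0 ∨ ν a = 0 then 0 else μ a * (-(Real.log (μ a / ν a) - β))) 0 := by
    refine HasDerivAt.fun_sum fun a _ => ?_
    unfold tilt
    split_ifs with h0
    · exact hasDerivAt_const _ _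
    · have h1 : HasDerivAt (fun s : ℝ => -s * (Real.log (μ a / ν a) - β))
          (-(Real.log (μ a / ν a) - β)) 0 := by
        simpa using ((hasDerivAt_id (0 : ℝ)).neg.mul_const (Real.log (μ a / ν a) - β))
      simpa using (h1.exp.const_mul (μ a))
  by_cases hac : ∀ a, ν a = 0 → μ a = 0
  · have hD : β < ∑ a, μ a * Real.log (μ a / ν a) := by
      rw [klDiv, if_pos hac] at h
      exact (ENNReal.ofReal_lt_ofReal_iff_of_nonneg hβ).1 h
    have h1 : (∑ a, if μ a = 0 ∨ ν a = 0 then 0 else μ a * (-(Real.log (μ a / ν a) - β)))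
        = β - ∑ a, μ a * Real.log (μ a / ν a) := by
      have : ∀ a, (if μ a = 0 ∨ ν a = 0 then 0 else μ a * (-(Real.log (μ a / ν a) - β)))
          = μ a * β - μ a * Real.log (μ a / ν a) := by
        intro a
        split_ifs with h0
        · have : μ a = 0 := h0.elim id (hac a)
          simp [this]
        · ring
      simp only [this]
      rw [Finset.sum_sub_distrib, ← Finset.sum_mul, hμ.2, one_mul]
    rw [h1] at hder
    have h0 : ∑ a, tilt μ ν β 0 a = 1 := by
      rw [← hμ.2]
      refine Finset.sum_congr rfl fun a _ => ?_
      unfold tilt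
      split_ifs with h0
      · exact (h0.elim id (hac a)).symm
      · simp
    have hs := (hasDerivAt_iff_tendsto_slope.1 hder).eventually_lt_const
      (show β - ∑ a, μ a * Real.log (μ a / ν a) < 0 by linarith)
    have hs' : ∀ᶠ s in nhdsWithin (0 : ℝ) (Set.Ioi 0),
        slope (fun s => ∑ a, tilt μ ν β s a) 0 s < 0 :=
      hs.filter_mono (nhdsWithin_mono _ (fun x hx => ne_of_gt hx))
    obtain ⟨s, hs1, hs2⟩ := (hs'.and self_mem_nhdsWithin).exists
    refine ⟨s, hs2, ?_⟩
    have hs3 : 0 < s := hs2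
    rw [slope_def_field, div_neg_iff] at hs1
    simp only [h0] at hs1
    rcases hs1 with hs1 | hs1 <;> linarith [hs1.1, hs1.2]
  · push Not at hac
    obtain ⟨b, hb0, hb⟩ := hac
    have h0 : ∑ a, tilt μ ν β 0 a < 1 := by
      rw [← hμ.2]
      refine Finset.sum_lt_sum (fun a _ => ?_) ⟨b, Finset.mem_univ _, ?_⟩
      · unfold tilt
        split_ifs with h0
        · exact hμ.1 a
        · simp
      · simp only [tilt, hb0, or_true, if_true]
        exact lt_of_le_of_ne (hμ.1 b) (Ne.symm hb)
    have hs : ∀ᶠ s in nhdsWithin (0 : ℝ) (Set.Ioi 0), ∑ a, tilt μ ν β s a < 1 :=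
      (hder.continuousAt.eventually_lt_const h0).filter_mono nhdsWithin_le_nhds
    obtain ⟨s, hs1, hs2⟩ := (hs.and self_mem_nhdsWithin).exists
    exact ⟨s, hs2, hs1⟩

lemma tilt_nonneg {S : Type*} (μ ν : S → ℝ) (hμ : ∀ a, 0 ≤ μ a) (β s : ℝ) (a : S) :
    0 ≤ tilt μ ν β s a := by
  unfold tilt
  split_ifs
  · exact le_rfl
  · exact mul_nonneg (hμ a) (Real.exp_pos _).le

open scoped Classical in
/-- Chernoff bound: a likelihood-ratio test whose exponent is below the divergence rejects a
genuine `μ`-sample with exponentially small probability. -/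
lemma chernoff {S : Type*} [Fintype S] (μ ν : S → ℝ) (hμ : IsDist μ) (hν : ∀ a, 0 ≤ ν a)
    (β : ℝ) (hβ : 0 ≤ β) (h : ENNReal.ofReal β < klDiv μ ν) :
    ∃ ρ : ℝ, 0 ≤ ρ ∧ ρ < 1 ∧ ∀ n : ℕ,
      ∑ z : Fin n → S, (∏ i, μ (z i)) *
        (if ∏ i, μ (z i) ≤ Real.exp (β * n) * ∏ i, ν (z i) then 1 else 0) ≤ ρ ^ n := by
  obtain ⟨s, hs, hlt⟩ := exists_tilt_lt_one μ ν hμ β hβ h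
  refine ⟨_, Finset.sum_nonneg fun a _ => tilt_nonneg μ ν hμ.1 β s a, hlt, fun n => ?_⟩
  have hpow : (∑ a, tilt μ ν β s a) ^ n = ∑ z : Fin n → S, ∏ i, tilt μ ν β s (z i) := by
    rw [← Fintype.prod_sum (fun (_ : Fin n) a => tilt μ ν β s a)]
    simp
  rw [hpow]
  refine Finset.sum_le_sum fun z _ => ?_
  have hnn : 0 ≤ ∏ i, tilt μ ν β s (z i) :=
    Finset.prod_nonneg fun i _ => tilt_nonneg μ ν hμ.1 β s _
  split_ifs with hz
  swap
  · simpa using hnn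
  rw [mul_one]
  by_cases h0 : ∃ i, μ (z i) = 0
  · obtain ⟨i, hi⟩ := h0
    rw [Finset.prod_eq_zero (Finset.mem_univ i) hi]
    exact hnn
  push Not at h0
  have hpos : ∀ i, 0 < μ (z i) := fun i => lt_of_le_of_ne (hμ.1 _) (Ne.symm (h0 i))
  have hppos : 0 < ∏ i, μ (z i) := Finset.prod_pos fun i _ => hpos i
  have hν0 : ∀ i, ν (z i) ≠ 0 := by
    intro i hi
    rw [Finset.prod_eq_zero (f := fun i => ν (z i)) (Finset.mem_univ i) hi, mul_zero] at hz
    linarith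
  have hνpos : ∀ i, 0 < ν (z i) := fun i => lt_of_le_of_ne (hν _) (Ne.symm (hν0 i))
  have hνppos : 0 < ∏ i, ν (z i) := Finset.prod_pos fun i _ => hνpos i
  have ht : ∀ i, tilt μ ν β s (z i) =
      μ (z i) * Real.exp (-s * (Real.log (μ (z i) / ν (z i)) - β)) := fun i => by
    simp [tilt, h0 i, hν0 i]
  simp only [ht]
  rw [Finset.prod_mul_distrib, ← Real.exp_sum]
  refine le_mul_of_one_le_right hppos.le (Real.one_le_exp ?_)
  rw [← Finset.mul_sum, Finset.sum_sub_distrib]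
  have hlog : ∑ i, Real.log (μ (z i) / ν (z i)) ≤ β * n := by
    rw [← Real.log_prod (fun i _ => (div_pos (hpos i) (hνpos i)).ne'), Finset.prod_div_distrib,
      Real.log_le_iff_le_exp (div_pos hppos hνppos), div_le_iff₀ hνppos]
    exact hz
  have : ∑ i : Fin n, β = β * n := by simp [mul_comm]
  rw [this]
  nlinarith

open scoped Classical in
/-- The threshold test `K * p z < r z` accepts a sample from `p` with probability at most `K⁻¹`
as soon as `r` is a subprobability. -/
lemma false_accept {S : Type*} [Fintype S] (p r : S → ℝ) (hr : ∀ z, 0 ≤ r z)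
    (hsum : ∑ z, r z ≤ 1) (K : ℝ) (hK : 0 < K) :
    ∑ z, p z * (if K * p z < r z then 1 else 0) ≤ K⁻¹ := by
  have h : ∀ z, p z * (if K * p z < r z then 1 else 0) ≤ K⁻¹ * r z := by
    intro z
    split_ifs with hz
    · rw [mul_one, inv_mul_eq_div, le_div_iff₀ hK]
      linarith
    · rw [mul_zero]
      exact mul_nonneg (inv_nonneg.2 hK.le) (hr z)
  calc _ ≤ ∑ z, K⁻¹ * r z := Finset.sum_le_sum fun z _ => h z
    _ = K⁻¹ * ∑ z, r z := by rw [Finset.mul_sum]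
    _ ≤ K⁻¹ := mul_le_of_le_one_right (inv_nonneg.2 hK.le) hsum

open scoped Classical in
/-- For a fixed output word `z`, an independent random input word `v` passes the threshold test
on `Q(z|v)` against the output distribution with probability at most `K⁻¹`: the mean of `Q(z|v)`
over `v` is the output probability of `z`. -/
lemma random_accept [Fintype X] [Fintype Y] (P : X → ℝ) (hP : IsDist P) (Q : X → Y → ℝ)
    (hQ : IsChannel Q) (n : ℕ) (z : Fin n → Y) (K : ℝ) (hK : 0 < K) :
    ∑ v : Fin n → X, (∏ i, P (v i)) *
      (if K * ∏ i, margY (joint P Q) (z i) < ∏ i, Q (v i) (z i) then 1 else 0) ≤ K⁻¹ := by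
  have hmean : ∑ v : Fin n → X, (∏ i, P (v i)) * ∏ i, Q (v i) (z i) =
      ∏ i, margY (joint P Q) (z i) := by
    simp only [margY, joint, ← Finset.prod_mul_distrib]
    rw [← Fintype.prod_sum (fun i x => P x * Q x (z i))]
  have hPnn : ∀ v : Fin n → X, 0 ≤ ∏ i, P (v i) := fun v => Finset.prod_nonneg fun i _ => hP.1 _
  have hQnn : ∀ v : Fin n → X, 0 ≤ ∏ i, Q (v i) (z i) := fun v =>
    Finset.prod_nonneg fun i _ => (hQ _).1 _
  have hqnn : 0 ≤ ∏ i, margY (joint P Q) (z i) := by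
    rw [← hmean]
    exact Finset.sum_nonneg fun v _ => mul_nonneg (hPnn v) (hQnn v)
  rcases hqnn.eq_or_lt with h0 | hpos
  -- If `z` has output probability `0`, no word of positive probability can produce it.
  · rw [← h0] at hmean ⊢
    have hz := (Finset.sum_eq_zero_iff_of_nonneg
      (fun v _ => mul_nonneg (hPnn v) (hQnn v))).1 hmean
    have : ∀ v : Fin n → X, (∏ i, P (v i)) *
        (if K * 0 < ∏ i, Q (v i) (z i) then (1 : ℝ) else 0) = 0 := by
      intro v
      split_ifs with h
      · rw [mul_zero] at h
        rcases mul_eq_zero.1 (hz v (Finset.mem_univ v)) with h1 | h1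
        · simp [h1]
        · exact absurd h1 h.ne'
      · simp
    rw [Finset.sum_congr rfl fun v _ => this v]
    simpa using hK.le
  · have h : ∀ v : Fin n → X, (∏ i, P (v i)) *
        (if K * ∏ i, margY (joint P Q) (z i) < ∏ i, Q (v i) (z i) then (1 : ℝ) else 0) ≤
        (K * ∏ i, margY (joint P Q) (z i))⁻¹ * ((∏ i, P (v i)) * ∏ i, Q (v i) (z i)) := by
      intro v
      have hKq : 0 < K * ∏ i, margY (joint P Q) (z i) := mul_pos hK hpos
      split_ifs with hv
      · rw [mul_one, inv_mul_eq_div, le_div_iff₀ hKq]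
        exact mul_le_mul_of_nonneg_left hv.le (hPnn v)
      · rw [mul_zero]
        exact mul_nonneg (inv_nonneg.2 hKq.le) (mul_nonneg (hPnn v) (hQnn v))
    refine (Finset.sum_le_sum fun v _ => h v).trans ?_
    rw [← Finset.mul_sum, hmean, mul_inv, mul_assoc, inv_mul_cancel₀ hpos.ne', mul_one]

lemma margX_joint [Fintype Y] [Fintype X] (P : X → ℝ) (Q : X → Y → ℝ) (hQ : IsChannel Q) :
    margX (joint P Q) = P := by
  funext x
  simp [margX, joint, ← Finset.mul_sum, (hQ x).2]

open scoped Classical in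
/-- A random codeword sent over the channel fails the information-density threshold test at a
level below the mutual information with exponentially small probability. -/
lemma info_density [Fintype X] [Fintype Y] (P : X → ℝ) (hP : IsDist P) (Q : X → Y → ℝ)
    (hQ : IsChannel Q) (γ : ℝ) (hγ : 0 ≤ γ) (h : γ < mi (joint P Q)) :
    ∃ ρ : ℝ, 0 ≤ ρ ∧ ρ < 1 ∧ ∀ n : ℕ,
      ∑ v : Fin n → X, (∏ i, P (v i)) * ∑ z : Fin n → Y, (∏ i, Q (v i) (z i)) *
        (if Real.exp (γ * n) * ∏ i, margY (joint P Q) (z i) < ∏ i, Q (v i) (z i) then 0 else 1)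
      ≤ ρ ^ n := by
  have hJnn : ∀ p, 0 ≤ joint P Q p := fun p => mul_nonneg (hP.1 _) ((hQ _).1 _)
  have hqnn : ∀ y, 0 ≤ margY (joint P Q) y := fun y => Finset.sum_nonneg fun x _ => hJnn _
  have hJ : IsDist (joint P Q) := by
    refine ⟨hJnn, ?_⟩
    rw [Fintype.sum_prod_type]
    have := margX_joint P Q hQ
    simp only [funext_iff, margX] at this
    simp only [this, hP.2]
  obtain ⟨ρ, h0, h1, hρ⟩ := chernoff (joint P Q)
    (fun p => margX (joint P Q) p.1 * margY (joint P Q) p.2) hJ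
    (fun p => by rw [margX_joint P Q hQ]; exact mul_nonneg (hP.1 _) (hqnn _)) γ hγ (by
      rw [klDiv, if_pos]
      · exact (ENNReal.ofReal_lt_ofReal_iff_of_nonneg hγ).2 h
      · rintro ⟨x, y⟩ hxy
        rcases mul_eq_zero.1 hxy with hx | hy
        · rw [margX_joint P Q hQ] at hx
          simp only at hx
          simp [joint, hx]
        · exact (Finset.sum_eq_zero_iff_of_nonneg (fun x _ => hJnn (x, y))).1 hy x
            (Finset.mem_univ x))
  refine ⟨ρ, h0, h1, fun n => le_trans (le_of_eq ?_) ((Finset.sum_le_sum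
    (f := fun a : Fin n → X × Y => (∏ i, P (a i).1) * ((∏ i, Q (a i).1 (a i).2) *
      (if Real.exp (γ * n) * ∏ i, margY (joint P Q) (a i).2 < ∏ i, Q (a i).1 (a i).2
        then 0 else 1))) fun a _ => ?_).trans (hρ n))⟩
  · simp only [Finset.mul_sum]
    rw [← Equiv.sum_comp (Equiv.arrowProdEquivProdArrow (Fin n) (fun _ => X) (fun _ => Y)).symm,
      Fintype.sum_prod_type]
    rfl
  · rw [margX_joint P Q hQ]
    simp only [joint, Finset.prod_mul_distrib, mul_assoc]
    have hPnn : 0 ≤ ∏ i, P (a i).1 := Finset.prod_nonneg fun i _ => hP.1 _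
    have hQnn : 0 ≤ ∏ i, Q (a i).1 (a i).2 := Finset.prod_nonneg fun i _ => (hQ _).1 _
    split_ifs with ha hb hb
    · simp only [mul_zero, mul_one]; positivity
    · simp
    · exact le_rfl
    · exfalso
      apply hb
      have := mul_le_mul_of_nonneg_left (not_lt.1 ha) hPnn
      calc _ ≤ _ := this
        _ = _ := by ring

/-! ### Windows of the output sequence and threshold tests -/

/-- Channel input at the 0-based time `t` when the codeword `c` starts at the 0-based time `s`,
that is, at `l = s + 1` in the numbering of `seqProb`. -/
def chanIn (star : X) {N : ℕ} (c : Fin N → X) (s t : ℕ) : X :=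
  if h : s ≤ t ∧ t < s + N then c ⟨t - s, by omega⟩ else star

lemma chanIn_window (star : X) {N : ℕ} (c : Fin N → X) (s : ℕ) (i : Fin N) (t : ℕ)
    (ht : t = s + i) : chanIn star c s t = c i := by
  subst ht
  have := i.2
  rw [chanIn, dif_pos (by omega)]
  congr 1
  ext
  simp

lemma chanIn_noise (star : X) {N : ℕ} (c : Fin N → X) (s t : ℕ) (h : t < s ∨ s + N ≤ t) :
    chanIn star c s t = star := by
  rw [chanIn, dif_neg (by omega)]

lemma seqProb_eq (Q : X → Y → ℝ) (star : X) {N T : ℕ} (c : Fin N → X) (s : ℕ) (y : Fin T → Y) :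
    seqProb Q star c (s + 1) y = ∏ t : Fin T, Q (chanIn star c s t) (y t) := by
  unfold seqProb chanIn
  refine Finset.prod_congr rfl fun t _ => ?_
  congr 1
  by_cases h : s ≤ (t : ℕ) ∧ (t : ℕ) < s + N
  · rw [dif_pos h, dif_pos (by omega)]
    congr 2
    omega
  · rw [dif_neg h, dif_neg (by omega)]

/-- Position of the `i`-th prefix symbol of a codeword of length `k + n` starting at time `s`. -/
def preIdx {k n A : ℕ} (s : Fin A) (i : Fin k) : Fin (A + (k + n) - 1) :=
  ⟨s + i, by have := s.2; have := i.2; omega⟩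

/-- Position of the `i`-th suffix symbol of a codeword of length `k + n` starting at time `s`. -/
def sufIdx {k n A : ℕ} (s : Fin A) (i : Fin n) : Fin (A + (k + n) - 1) :=
  ⟨s + (k + i), by have := s.2; have := i.2; omega⟩

lemma preIdx_injective {k n A : ℕ} (s : Fin A) :
    Function.Injective (preIdx (k := k) (n := n) s) := by
  intro i j h
  simp only [preIdx, Fin.mk.injEq] at h
  ext; omega

lemma sufIdx_injective {k n A : ℕ} (s : Fin A) :
    Function.Injective (sufIdx (k := k) (n := n) s) := by
  intro i j h
  simp only [sufIdx, Fin.mk.injEq] at h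
  ext; omega

/-- Prefix test at start time `s`: the likelihood ratio of the symbol `x` against the noise symbol
on the prefix window exceeds `e^{βk}`. -/
def PreOK (Q : X → Y → ℝ) (star x : X) (β : ℝ) (k n : ℕ) {A : ℕ} (s : Fin A)
    (y : Fin (A + (k + n) - 1) → Y) : Prop :=
  Real.exp (β * k) * ∏ i : Fin k, Q star (y (preIdx s i)) < ∏ i : Fin k, Q x (y (preIdx s i))

/-- Suffix test at start time `s`: the information density between the word `v` and the suffix
window, relative to the output distribution `q`, exceeds `γn`. -/
def SufOK (Q : X → Y → ℝ) (q : Y → ℝ) (γ : ℝ) (k : ℕ) {n A : ℕ} (v : Fin n → X) (s : Fin A)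
    (y : Fin (A + (k + n) - 1) → Y) : Prop :=
  Real.exp (γ * n) * ∏ i : Fin n, q (y (sufIdx s i)) < ∏ i : Fin n, Q (v i) (y (sufIdx s i))

/-- The codeword with prefix `x ⋯ x` of length `k` and suffix `v`. -/
def codeword (x : X) (k : ℕ) {n : ℕ} (v : Fin n → X) : Fin (k + n) → X :=
  Fin.append (fun _ : Fin k => x) v

lemma chanIn_pre (star x : X) {k n A : ℕ} (v : Fin n → X) (s : Fin A) (i : Fin k) :
    chanIn star (codeword x k v) s (preIdx (n := n) s i) = x := by
  have h : ((preIdx (n := n) s i : Fin _) : ℕ) = s + (Fin.castAdd n i : Fin (k + n)) := rfl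
  rw [chanIn_window star _ s (Fin.castAdd n i) _ h, codeword, Fin.append_left]

lemma chanIn_suf (star x : X) {k n A : ℕ} (v : Fin n → X) (s : Fin A) (i : Fin n) :
    chanIn star (codeword x k v) s (sufIdx (k := k) s i) = v i := by
  have h : ((sufIdx (k := k) s i : Fin _) : ℕ) = s + (Fin.natAdd k i : Fin (k + n)) := rfl
  rw [chanIn_window star _ s (Fin.natAdd k i) _ h, codeword, Fin.append_right]

open scoped Classical in
/-- Probability of the event `E` when `c` is sent starting at the 0-based time `s`. -/
noncomputable def prob [Fintype Y] (Q : X → Y → ℝ) (star : X) {N T : ℕ} (c : Fin N → X) (s : ℕ)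
    (E : (Fin T → Y) → Prop) : ℝ :=
  ∑ y : Fin T → Y, (∏ t : Fin T, Q (chanIn star c s t) (y t)) * (if E y then 1 else 0)

lemma prob_eq [Fintype Y] (Q : X → Y → ℝ) (star : X) {N T : ℕ} (c : Fin N → X) (s : ℕ)
    (E : (Fin T → Y) → Prop) (G : (Fin T → Y) → ℝ) (h1 : ∀ y, E y → G y = 1)
    (h0 : ∀ y, ¬ E y → G y = 0) :
    prob Q star c s E = ∑ y : Fin T → Y, (∏ t : Fin T, Q (chanIn star c s t) (y t)) * G y := by
  refine Finset.sum_congr rfl fun y _ => ?_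
  split_ifs with h
  · rw [h1 y h]
  · rw [h0 y h]

lemma seq_nonneg [Fintype Y] [Fintype X] (Q : X → Y → ℝ) (hQ : IsChannel Q) (star : X) {N T : ℕ}
    (c : Fin N → X) (s : ℕ) (y : Fin T → Y) : 0 ≤ ∏ t : Fin T, Q (chanIn star c s t) (y t) :=
  Finset.prod_nonneg fun _ _ => (hQ _).1 _

lemma prob_mono [Fintype Y] [Fintype X] (Q : X → Y → ℝ) (hQ : IsChannel Q) (star : X) {N T : ℕ}
    (c : Fin N → X) (s : ℕ) (E F : (Fin T → Y) → Prop) (h : ∀ y, E y → F y) :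
    prob Q star c s E ≤ prob Q star c s F := by
  classical
  refine Finset.sum_le_sum fun y _ => mul_le_mul_of_nonneg_left ?_ (seq_nonneg Q hQ star c s y)
  by_cases hE : E y
  · simp [hE, h y hE]
  · simp only [hE, if_false]; split_ifs <;> norm_num

/-- The prefix test at the true start time depends only on a `Q(·|x)`-sample of length `k`. -/
lemma prefix_miss [Fintype X] [Fintype Y] (Q : X → Y → ℝ) (hQ : IsChannel Q) (star x : X) (β ρ : ℝ)
    {k n A : ℕ}
    (hρ : ∑ z : Fin k → Y, (∏ i, Q x (z i)) * (open scoped Classical in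
        (if ∏ i, Q x (z i) ≤ Real.exp (β * k) * ∏ i, Q star (z i) then 1 else 0)) ≤ ρ)
    (v : Fin n → X) (s : Fin A) :
    prob Q star (codeword x k v) s (fun y => ¬ PreOK Q star x β k n s y) ≤ ρ := by
  classical
  refine le_trans (le_of_eq ?_) hρ
  have := sum_marginal (fun (t : Fin (A + (k + n) - 1)) b => Q (chanIn star (codeword x k v) s t) b)
    (fun t => (hQ _).2) (preIdx s) (preIdx_injective s)
    (fun z : Fin k → Y =>
      if ∏ i, Q x (z i) ≤ Real.exp (β * k) * ∏ i, Q star (z i) then (1 : ℝ) else 0)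
  simp only [chanIn_pre] at this
  rw [← this]
  exact prob_eq _ _ _ _ _ _ (fun y h => if_pos (not_lt.1 h))
    (fun y h => if_neg fun h' => h (not_lt.2 h'))

lemma suffix_miss [Fintype X] [Fintype Y] (Q : X → Y → ℝ) (hQ : IsChannel Q) (star x : X)
    (q : Y → ℝ) (γ : ℝ) {k n A : ℕ} (v : Fin n → X) (s : Fin A) :
    prob Q star (codeword x k v) s (fun y => ¬ SufOK Q q γ k v s y) =
      ∑ z : Fin n → Y, (∏ i, Q (v i) (z i)) * (open scoped Classical in
        (if Real.exp (γ * n) * ∏ i, q (z i) < ∏ i, Q (v i) (z i) then 0 else 1)) := by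
  classical
  have := sum_marginal (fun (t : Fin (A + (k + n) - 1)) b => Q (chanIn star (codeword x k v) s t) b)
    (fun t => (hQ _).2) (sufIdx s) (sufIdx_injective s)
    (fun z : Fin n → Y =>
      if Real.exp (γ * n) * ∏ i, q (z i) < ∏ i, Q (v i) (z i) then (0 : ℝ) else 1)
  simp only [chanIn_suf] at this
  rw [← this]
  exact prob_eq _ _ _ _ _ _ (fun y h => if_neg h) (fun y h => if_pos (not_not.1 h))

/-- A prefix window that does not meet the transmitted codeword contains pure noise and passes
the prefix test with probability at most `e^{-βk}`. -/
lemma noise_accept [Fintype X] [Fintype Y] (Q : X → Y → ℝ) (hQ : IsChannel Q) (star x : X)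
    (β : ℝ) {k n A : ℕ} (c : Fin (k + n) → X) (s s' : Fin A)
    (hfar : (s' : ℕ) + k ≤ s ∨ (s : ℕ) + (k + n) ≤ s') :
    prob Q star c s (fun y => PreOK Q star x β k n s' y) ≤ (Real.exp (β * k))⁻¹ := by
  classical
  have h1 : ∀ i : Fin k, chanIn star c s (preIdx (n := n) s' i) = star := fun i =>
    chanIn_noise _ _ _ _ (by have := i.2; simp only [preIdx]; omega)
  have := sum_marginal (fun (t : Fin (A + (k + n) - 1)) b => Q (chanIn star c s t) b)
    (fun t => (hQ _).2) (preIdx s') (preIdx_injective s')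
    (fun z : Fin k → Y =>
      if Real.exp (β * k) * ∏ i, Q star (z i) < ∏ i, Q x (z i) then (1 : ℝ) else 0)
  simp only [h1] at this
  refine ((prob_eq _ _ _ _ _ _ (fun y h => if_pos h) (fun y h => if_neg h)).trans this).trans_le ?_
  refine false_accept _ (fun z : Fin k → Y => ∏ i, Q x (z i))
    (fun z => Finset.prod_nonneg fun i _ => (hQ _).1 _) ?_ _ (Real.exp_pos _)
  exact (sum_prod_eq_one (fun (_ : Fin k) b => Q x b) (fun _ => (hQ x).2)).le

/-- Whatever is transmitted, an independent random suffix passes the suffix test at any given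
start time with probability at most `e^{-γn}`. -/
lemma random_suffix_accept [Fintype X] [Fintype Y] (P : X → ℝ) (hP : IsDist P) (Q : X → Y → ℝ)
    (hQ : IsChannel Q) (star : X) (γ : ℝ) {k n A : ℕ} (c : Fin (k + n) → X) (s s' : Fin A) :
    ∑ v : Fin n → X, (∏ i, P (v i)) *
      prob Q star c s (fun y => SufOK Q (margY (joint P Q)) γ k v s' y) ≤
      (Real.exp (γ * n))⁻¹ := by
  classical
  simp only [prob, Finset.mul_sum]
  rw [Finset.sum_comm]
  have h : ∀ y : Fin (A + (k + n) - 1) → Y, ∑ v : Fin n → X, (∏ i, P (v i)) *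
      ((∏ t : Fin (A + (k + n) - 1), Q (chanIn star c s t) (y t)) *
        (if SufOK Q (margY (joint P Q)) γ k v s' y then (1 : ℝ) else 0)) ≤
      (∏ t : Fin (A + (k + n) - 1), Q (chanIn star c s t) (y t)) * (Real.exp (γ * n))⁻¹ := by
    intro y
    simp only [mul_left_comm _ (∏ t : Fin (A + (k + n) - 1), Q (chanIn star c s t) (y t)), ← Finset.mul_sum]
    exact mul_le_mul_of_nonneg_left
      (random_accept P hP Q hQ n (fun i => y (sufIdx s' i)) _ (Real.exp_pos _))
      (seq_nonneg Q hQ star c s y)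
  refine (Finset.sum_le_sum fun y _ => h y).trans ?_
  rw [← Finset.sum_mul, sum_prod_eq_one (fun (t : Fin (A + (k + n) - 1)) b =>
    Q (chanIn star c s t) b) (fun t => (hQ _).2), one_mul]

/-! ### Random coding -/

lemma average_one {M : ℕ} {V : Type*} [Fintype V] (w : V → ℝ) (hw : ∑ v, w v = 1)
    (m : Fin M) (F : V → ℝ) :
    ∑ u : Fin M → V, (∏ j, w (u j)) * F (u m) = ∑ v, w v * F v := by
  have := sum_marginal (fun (_ : Fin M) v => w v) (fun _ => hw) (fun _ : Unit => m)
    (fun _ _ _ => rfl) (fun z => F (z ()))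
  rw [this, ← Equiv.sum_comp (Equiv.funUnique Unit V).symm]
  simp

lemma average_two {M : ℕ} {V : Type*} [Fintype V] (w : V → ℝ) (hw : ∑ v, w v = 1)
    (m m' : Fin M) (hm : m ≠ m') (F : V → V → ℝ) :
    ∑ u : Fin M → V, (∏ j, w (u j)) * F (u m) (u m') = ∑ v, w v * ∑ v', w v' * F v v' := by
  have := sum_marginal (fun (_ : Fin M) v => w v) (fun _ => hw) ![m, m']
    (by
      intro i j h
      fin_cases i <;> fin_cases j <;> simp_all [eq_comm])
    (fun z => F (z 0) (z 1))
  simp only [Matrix.cons_val_zero, Matrix.cons_val_one] at this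
  rw [this, ← Equiv.sum_comp (finTwoArrowEquiv V).symm, Fintype.sum_prod_type]
  simp [Finset.mul_sum, Fin.prod_univ_two, mul_assoc]

/-- Message `m` is accepted if both tests succeed at some start time. -/
def Accept (Q : X → Y → ℝ) (star x : X) (q : Y → ℝ) (β γ : ℝ) (k : ℕ) {n A M : ℕ}
    (u : Fin M → Fin n → X) (y : Fin (A + (k + n) - 1) → Y) (m : Fin M) : Prop :=
  ∃ s : Fin A, PreOK Q star x β k n s y ∧ SufOK Q q γ k (u m) s y

open scoped Classical in
/-- The decoder that observes the whole output sequence and outputs an accepted message if there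
is one; since there is no constraint on the delay, `τ` is the deterministic final time. -/
noncomputable def acceptDecoder (Q : X → Y → ℝ) (star x : X) (q : Y → ℝ) (β γ : ℝ) (k : ℕ)
    {n A M : ℕ} (m₀ : Fin M) (u : Fin M → Fin n → X) : Decoder Y (A + (k + n) - 1) M where
  τ _ := A + (k + n) - 1
  φ y := if h : ∃ m, Accept Q star x q β γ k u y m then h.choose else m₀
  τ_le _ := le_rfl
  stopping _ _ _ := rfl
  meas y y' h := by
    have : y = y' := funext fun t => h t t.2
    rw [this]

/-- The decoder errs only if the true message fails one of its tests at the true start time, or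
some other message passes both tests somewhere. -/
lemma error_le [Fintype X] [Fintype Y] (Q : X → Y → ℝ) (hQ : IsChannel Q) (star x : X)
    (q : Y → ℝ) (β γ : ℝ) {k n A M : ℕ} (m₀ : Fin M) (u : Fin M → Fin n → X) (m : Fin M)
    (s : Fin A) :
    ∑ y : Fin (A + (k + n) - 1) → Y,
      (if (acceptDecoder Q star x q β γ k m₀ u).φ y = m then 0
        else seqProb Q star (codeword x k (u m)) (s + 1) y) ≤
    prob Q star (codeword x k (u m)) s (fun y => ¬ PreOK Q star x β k n s y) +
    prob Q star (codeword x k (u m)) s (fun y => ¬ SufOK Q q γ k (u m) s y) +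
    ∑ m' ∈ Finset.univ.erase m, ∑ s' : Fin A, prob Q star (codeword x k (u m)) s
      (fun y => PreOK Q star x β k n s' y ∧ SufOK Q q γ k (u m') s' y) := by
  classical
  have hex : ∑ m' ∈ Finset.univ.erase m, ∑ s' : Fin A, prob Q star (codeword x k (u m)) s
      (fun y => PreOK Q star x β k n s' y ∧ SufOK Q q γ k (u m') s' y) =
      ∑ y : Fin (A + (k + n) - 1) → Y, (∏ t : Fin (A + (k + n) - 1), Q (chanIn star (codeword x k (u m)) s t) (y t)) *
        ∑ m' ∈ Finset.univ.erase m, ∑ s' : Fin A,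
          (if PreOK Q star x β k n s' y ∧ SufOK Q q γ k (u m') s' y then 1 else 0) := by
    simp only [prob, Finset.mul_sum]
    rw [Finset.sum_comm (s := (Finset.univ : Finset (Fin (A + (k + n) - 1) → Y)))]
    refine Finset.sum_congr rfl fun m' _ => ?_
    rw [Finset.sum_comm]
    refine Finset.sum_congr rfl fun y _ => Finset.sum_congr rfl fun s' _ => ?_
    congr
  rw [hex, prob, prob, ← Finset.sum_add_distrib, ← Finset.sum_add_distrib]
  refine Finset.sum_le_sum fun y _ => ?_
  rw [seqProb_eq, ← mul_add, ← mul_add]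
  have hp := seq_nonneg Q hQ star (codeword x k (u m)) s y
  have hS : ∀ m', (0 : ℝ) ≤ ∑ s' : Fin A,
      (if PreOK Q star x β k n s' y ∧ SufOK Q q γ k (u m') s' y then (1 : ℝ) else 0) := fun m' =>
    Finset.sum_nonneg fun s' _ => by split_ifs <;> norm_num
  have hSS : (0 : ℝ) ≤ ∑ m' ∈ Finset.univ.erase m, ∑ s' : Fin A,
      (if PreOK Q star x β k n s' y ∧ SufOK Q q γ k (u m') s' y then (1 : ℝ) else 0) :=
    Finset.sum_nonneg fun m' _ => hS m'
  split_ifs with h1 h2 h3 h3 h2 h3 h3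
  all_goals first
    | positivity
    | (refine le_mul_of_one_le_right hp ?_; linarith)
    | skip
  -- The true message is accepted, so the output is an accepted message other than `m`.
  refine le_mul_of_one_le_right hp ?_
  have hacc : ∃ m, Accept Q star x q β γ k u y m := ⟨m, s, h2, h3⟩
  have hφ : (acceptDecoder Q star x q β γ k m₀ u).φ y = hacc.choose := by
    simp only [acceptDecoder]
    rw [dif_pos hacc]
  obtain ⟨s', hs'⟩ := hacc.choose_spec
  rw [hφ] at h1
  have h5 := Finset.single_le_sum (fun m' _ => hS m')
    (Finset.mem_erase.2 ⟨h1, Finset.mem_univ hacc.choose⟩)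
  have h6 := Finset.single_le_sum (f := fun s' => if PreOK Q star x β k n s' y ∧
    SufOK Q q γ k (u hacc.choose) s' y then (1 : ℝ) else 0)
    (fun s' _ => by split_ifs <;> norm_num) (Finset.mem_univ s')
  simp only [if_pos hs'] at h6
  linarith

/-- Averaged over the random codebook, the error probability given message `m` and start time `s`
is small: wrong start times whose window meets the codeword are at most `2(k+n)` in number and are
ruled out by the random suffix, the others by the prefix test. -/
lemma average_error [Fintype X] [Fintype Y] (P : X → ℝ) (hP : IsDist P) (Q : X → Y → ℝ)
    (hQ : IsChannel Q) (star x : X) (β γ ρ₁ ρ₂ : ℝ) {k n A M : ℕ}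
    (hρ₁ : ∑ z : Fin k → Y, (∏ i, Q x (z i)) * (open scoped Classical in
        (if ∏ i, Q x (z i) ≤ Real.exp (β * k) * ∏ i, Q star (z i) then 1 else 0)) ≤ ρ₁)
    (hρ₂ : ∑ v : Fin n → X, (∏ i, P (v i)) * ∑ z : Fin n → Y, (∏ i, Q (v i) (z i)) *
        (open scoped Classical in
        (if Real.exp (γ * n) * ∏ i, margY (joint P Q) (z i) < ∏ i, Q (v i) (z i) then 0 else 1))
      ≤ ρ₂) (m₀ m : Fin M) (s : Fin A) :
    ∑ u : Fin M → Fin n → X, (∏ j, ∏ i, P (u j i)) * ∑ y : Fin (A + (k + n) - 1) → Y,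
      (if (acceptDecoder Q star x (margY (joint P Q)) β γ k m₀ u).φ y = m then 0
        else seqProb Q star (codeword x k (u m)) (s + 1) y) ≤
    ρ₁ + ρ₂ + M * (A * (Real.exp (β * k))⁻¹ + 2 * (k + n) * (Real.exp (γ * n))⁻¹) := by
  classical
  set q := margY (joint P Q) with hq
  set w : (Fin n → X) → ℝ := fun v => ∏ i, P (v i) with hw
  have hwnn : ∀ v, 0 ≤ w v := fun v => Finset.prod_nonneg fun i _ => hP.1 _
  have hw1 : ∑ v, w v = 1 := sum_prod_eq_one (fun (_ : Fin n) a => P a) (fun _ => hP.2)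
  have hWnn : ∀ u : Fin M → Fin n → X, 0 ≤ ∏ j, w (u j) := fun u =>
    Finset.prod_nonneg fun j _ => hwnn _
  let near : Fin A → Prop := fun s' => ¬ ((s' : ℕ) + k ≤ s ∨ (s : ℕ) + (k + n) ≤ s')
  let T : Fin A → (Fin n → X) → (Fin n → X) → ℝ := fun s' v v' =>
    prob Q star (codeword x k v) s (fun y => PreOK Q star x β k n s' y ∧ SufOK Q q γ k v' s' y)
  have hT : ∀ s', ∑ v, w v * ∑ v', w v' * T s' v v' ≤
      (Real.exp (β * k))⁻¹ + if near s' then (Real.exp (γ * n))⁻¹ else 0 := by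
    intro s'
    have hinner : ∀ v, ∑ v', w v' * T s' v v' ≤
        (Real.exp (β * k))⁻¹ + if near s' then (Real.exp (γ * n))⁻¹ else 0 := by
      intro v
      split_ifs with hn
      · have h1 : ∑ v', w v' * T s' v v' ≤ (Real.exp (γ * n))⁻¹ :=
          (Finset.sum_le_sum fun v' _ => mul_le_mul_of_nonneg_left
            (prob_mono Q hQ star _ _ _ _ fun y hy => hy.2) (hwnn v')).trans
            (random_suffix_accept P hP Q hQ star γ (codeword x k v) s s')
        have := inv_nonneg.2 (Real.exp_pos (β * k)).le
        linarith
      · have h1 : ∀ v', w v' * T s' v v' ≤ w v' * (Real.exp (β * k))⁻¹ := fun v' =>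
          mul_le_mul_of_nonneg_left ((prob_mono Q hQ star _ _ _ _ fun y hy => hy.1).trans
            (noise_accept Q hQ star x β (codeword x k v) s s' (not_not.1 hn))) (hwnn v')
        refine (Finset.sum_le_sum fun v' _ => h1 v').trans ?_
        rw [← Finset.sum_mul, hw1]
        simp
    refine (Finset.sum_le_sum fun v _ => mul_le_mul_of_nonneg_left (hinner v) (hwnn v)).trans ?_
    rw [← Finset.sum_mul, hw1, one_mul]
  have hnear : ((Finset.univ.filter near).card : ℝ) ≤ 2 * (k + n) := by
    have h1 : (Finset.univ.filter near).card ≤ (Finset.Ico (s + 1 - k : ℕ) (s + (k + n))).card := by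
      refine Finset.card_le_card_of_injOn (fun s' => (s' : ℕ)) ?_ (Fin.val_injective.injOn)
      intro s' hs'
      have h2 := (Finset.mem_filter.1 hs').2
      simp only [near] at h2
      simp only [Finset.coe_Ico, Set.mem_Ico]
      omega
    rw [Nat.card_Ico] at h1
    have h3 : (Finset.univ.filter near).card ≤ 2 * (k + n) := by omega
    exact_mod_cast h3
  have hsumT : ∑ s', ∑ v, w v * ∑ v', w v' * T s' v v' ≤
      A * (Real.exp (β * k))⁻¹ + 2 * (k + n) * (Real.exp (γ * n))⁻¹ := by
    refine (Finset.sum_le_sum fun s' _ => hT s').trans ?_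
    rw [Finset.sum_add_distrib, ← Finset.sum_filter]
    simp only [Finset.sum_const, Finset.card_univ, Fintype.card_fin, nsmul_eq_mul]
    have := mul_le_mul_of_nonneg_right hnear (inv_nonneg.2 (Real.exp_pos (γ * n)).le)
    linarith
  have hB : 0 ≤ A * (Real.exp (β * k))⁻¹ + 2 * (k + n) * (Real.exp (γ * n))⁻¹ := by positivity
  refine (Finset.sum_le_sum fun u _ => mul_le_mul_of_nonneg_left
    (error_le Q hQ star x q β γ m₀ u m s) (hWnn u)).trans ?_
  simp only [mul_add (∏ j, w _)]
  rw [Finset.sum_add_distrib, Finset.sum_add_distrib]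
  refine add_le_add (add_le_add ?_ ?_) ?_
  · rw [average_one w hw1 m (fun v => prob Q star (codeword x k v) s
      (fun y => ¬ PreOK Q star x β k n s y))]
    refine (Finset.sum_le_sum fun v _ => mul_le_mul_of_nonneg_left
      (prefix_miss Q hQ star x β ρ₁ hρ₁ v s) (hwnn v)).trans ?_
    rw [← Finset.sum_mul, hw1, one_mul]
  · rw [average_one w hw1 m (fun v => prob Q star (codeword x k v) s
      (fun y => ¬ SufOK Q q γ k v s y))]
    simp only [suffix_miss Q hQ star x q γ]
    exact hρ₂
  · simp only [Finset.mul_sum]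
    rw [Finset.sum_comm]
    have h1 : ∀ m' ∈ Finset.univ.erase m, ∑ u : Fin M → Fin n → X, ∑ s' : Fin A,
        (∏ j, w (u j)) * prob Q star (codeword x k (u m)) s
          (fun y => PreOK Q star x β k n s' y ∧ SufOK Q q γ k (u m') s' y) ≤
        A * (Real.exp (β * k))⁻¹ + 2 * (k + n) * (Real.exp (γ * n))⁻¹ := by
      intro m' hm'
      rw [Finset.sum_comm]
      refine le_trans (le_of_eq (Finset.sum_congr rfl fun s' _ => ?_)) hsumT
      exact average_two w hw1 m m' (Finset.ne_of_mem_erase hm').symm (T s')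
    refine (Finset.sum_le_card_nsmul _ _ _ h1).trans ?_
    rw [nsmul_eq_mul]
    refine mul_le_mul_of_nonneg_right ?_ hB
    have := Finset.card_le_univ (Finset.univ.erase m)
    rw [Fintype.card_fin] at this
    exact_mod_cast this

/-- Random coding: some codebook performs at least as well as the average. -/
lemma exists_code [Fintype X] [Fintype Y] (P : X → ℝ) (hP : IsDist P) (Q : X → Y → ℝ)
    (hQ : IsChannel Q) (star x : X) (β γ ρ₁ ρ₂ : ℝ) {k n A M : ℕ}
    (hρ₁ : ∑ z : Fin k → Y, (∏ i, Q x (z i)) * (open scoped Classical in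
        (if ∏ i, Q x (z i) ≤ Real.exp (β * k) * ∏ i, Q star (z i) then 1 else 0)) ≤ ρ₁)
    (hρ₂ : ∑ v : Fin n → X, (∏ i, P (v i)) * ∑ z : Fin n → Y, (∏ i, Q (v i) (z i)) *
        (open scoped Classical in
        (if Real.exp (γ * n) * ∏ i, margY (joint P Q) (z i) < ∏ i, Q (v i) (z i) then 0 else 1))
      ≤ ρ₂) (hA : 0 < A) (hM : 0 < M) :
    ∃ (c : Fin M → Fin (k + n) → X) (dec : Decoder Y (A + (k + n) - 1) M),
      errProb Q star c A dec ≤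
        ρ₁ + ρ₂ + M * (A * (Real.exp (β * k))⁻¹ + 2 * (k + n) * (Real.exp (γ * n))⁻¹) := by
  classical
  set B := ρ₁ + ρ₂ + M * (A * (Real.exp (β * k))⁻¹ + 2 * (k + n) * (Real.exp (γ * n))⁻¹) with hB
  let m₀ : Fin M := ⟨0, hM⟩
  let w : (Fin n → X) → ℝ := fun v => ∏ i, P (v i)
  let W : (Fin M → Fin n → X) → ℝ := fun u => ∏ j, w (u j)
  have hW1 : ∑ u, W u = 1 := sum_prod_eq_one (fun (_ : Fin M) v => w v)
    (fun _ => sum_prod_eq_one (fun (_ : Fin n) a => P a) (fun _ => hP.2))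
  have hWnn : ∀ u, 0 ≤ W u := fun u =>
    Finset.prod_nonneg fun j _ => Finset.prod_nonneg fun i _ => hP.1 _
  let dec : (Fin M → Fin n → X) → Decoder Y (A + (k + n) - 1) M := fun u =>
    acceptDecoder Q star x (margY (joint P Q)) β γ k m₀ u
  let F : (Fin M → Fin n → X) → ℝ := fun u =>
    errProb Q star (fun m => codeword x k (u m)) A (dec u)
  let g : (Fin M → Fin n → X) → Fin M → ℕ → ℝ := fun u m l => ∑ y : Fin (A + (k + n) - 1) → Y,
      if (dec u).φ y = m then 0 else seqProb Q star (codeword x k (u m)) l y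
  have hF : ∀ u, F u = (1 / ((A : ℝ) * M)) * ∑ m, ∑ s : Fin A, g u m (s + 1) := by
    intro u
    change (1 / ((A : ℝ) * M)) * ∑ m, ∑ l ∈ Finset.Icc 1 A, g u m l = _
    congr 1
    refine Finset.sum_congr rfl fun m _ => ?_
    rw [← Finset.sum_range (fun s => g u m (s + 1)), Finset.range_eq_Ico,
      Finset.sum_Ico_add' (fun l => g u m l) 0 A 1]
    rfl
  have havg : ∑ u, W u * F u ≤ B := by
    have h1 : ∑ u, W u * F u =
        (1 / ((A : ℝ) * M)) * ∑ m, ∑ s : Fin A, ∑ u, W u * g u m (s + 1) := by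
      simp only [hF, mul_left_comm (W _), ← Finset.mul_sum]
      congr 1
      simp only [Finset.mul_sum]
      rw [Finset.sum_comm]
      refine Finset.sum_congr rfl fun m _ => ?_
      rw [Finset.sum_comm]
    have h2 : ∑ m : Fin M, ∑ s : Fin A, ∑ u, W u * g u m (s + 1) ≤
        ∑ m : Fin M, ∑ s : Fin A, B :=
      Finset.sum_le_sum fun m _ => Finset.sum_le_sum fun s _ =>
        average_error P hP Q hQ star x β γ ρ₁ ρ₂ hρ₁ hρ₂ m₀ m s
    rw [h1]
    refine (mul_le_mul_of_nonneg_left h2 (by positivity)).trans (le_of_eq ?_)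
    have hA' : (A : ℝ) ≠ 0 := by exact_mod_cast hA.ne'
    have hM' : (M : ℝ) ≠ 0 := by exact_mod_cast hM.ne'
    simp only [Finset.sum_const, Finset.card_univ, Fintype.card_fin, nsmul_eq_mul]
    field_simp
  obtain ⟨u, hu⟩ : ∃ u, F u ≤ B := by
    by_contra! hcon
    obtain ⟨u₀, -, hu₀⟩ := Finset.exists_ne_zero_of_sum_ne_zero (hW1.trans_ne one_ne_zero)
    have : ∑ u, W u * B < ∑ u, W u * F u :=
      Finset.sum_lt_sum (fun u _ => mul_le_mul_of_nonneg_left (hcon u).le (hWnn u))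
        ⟨u₀, Finset.mem_univ _, mul_lt_mul_of_pos_left (hcon u₀)
          (lt_of_le_of_ne (hWnn u₀) (Ne.symm hu₀))⟩
    rw [← Finset.sum_mul, hW1, one_mul] at this
    linarith
  exact ⟨_, _, hu⟩

/-! ### Choice of parameters -/

lemma exists_exponent {a : ℝ} (ha : 0 ≤ a) {D : ENNReal} (h : ENNReal.ofReal a < D) :
    ∃ β, a < β ∧ ENNReal.ofReal β < D := by
  obtain ⟨b, hab, hb⟩ := exists_between h
  have hbt : b ≠ ⊤ := ne_top_of_lt hb
  refine ⟨b.toReal, ?_, by rwa [ENNReal.ofReal_toReal hbt]⟩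
  exact (ENNReal.ofReal_lt_iff_lt_toReal ha hbt).1 hab

lemma exists_pos_mi [Fintype X] [Fintype Y] (Q : X → Y → ℝ) (hC : 0 < capacity Q) :
    ∃ P : X → ℝ, IsDist P ∧ 0 < mi (joint P Q) := by
  by_contra! hcon
  refine absurd hC (not_lt.2 (Real.sSup_nonpos ?_))
  rintro v ⟨P, hP, rfl⟩
  exact hcon P hP

/-- For codewords with at least `δN` suffix symbols out of `N = k + n`, the union bound over
`⌈e^{RN}⌉ + 1` messages of the false-acceptance probabilities decays like `N e^{-RN}`, provided
that `R` leaves a margin of `R` in both `α + R < β(1-δ)` and `R < γδ`. -/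
lemma union_bound {α β γ δ R : ℝ} (hα : 0 ≤ α) (hβ : 0 ≤ β) (hγ : 0 ≤ γ) (hR : 0 ≤ R)
    (h1 : α + 2 * R ≤ β * (1 - δ)) (h2 : 2 * R ≤ γ * δ) {k n : ℕ}
    (hn : δ * (k + n : ℕ) ≤ n) (hk : (1 - δ) * (k + n : ℕ) - 1 ≤ k) :
    ((⌈Real.exp (R * (k + n : ℕ))⌉₊ + 1 : ℕ) : ℝ) *
      ((⌈Real.exp (α * (k + n : ℕ))⌉₊ : ℝ) * (Real.exp (β * k))⁻¹ +
        2 * (k + n) * (Real.exp (γ * n))⁻¹) ≤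
    6 * Real.exp β * Real.exp (-R * (k + n : ℕ)) +
      6 * ((k + n : ℕ) * Real.exp (-R * (k + n : ℕ))) := by
  have hNN : (k : ℝ) + n = ((k + n : ℕ) : ℝ) := by push_cast; ring
  rw [hNN]
  generalize ((k + n : ℕ) : ℝ) = N at *
  have hN : 0 ≤ N := by rw [← hNN]; positivity
  have hM : ((⌈Real.exp (R * N)⌉₊ + 1 : ℕ) : ℝ) ≤ 3 * Real.exp (R * N) := by
    have := Nat.ceil_lt_add_one (Real.exp_pos (R * N)).le
    have := Real.one_le_exp (mul_nonneg hR hN)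
    push_cast
    linarith
  have hA : (⌈Real.exp (α * N)⌉₊ : ℝ) ≤ 2 * Real.exp (α * N) := by
    have := Nat.ceil_lt_add_one (Real.exp_pos (α * N)).le
    have := Real.one_le_exp (mul_nonneg hα hN)
    linarith
  rw [← Real.exp_neg, ← Real.exp_neg]
  have e1 : Real.exp (R * N) * (Real.exp (α * N) * Real.exp (-(β * k))) ≤
      Real.exp β * Real.exp (-R * N) := by
    rw [← Real.exp_add, ← Real.exp_add, ← Real.exp_add, Real.exp_le_exp]
    nlinarith [mul_le_mul_of_nonneg_left hk hβ, mul_le_mul_of_nonneg_right h1 hN]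
  have e2 : Real.exp (R * N) * Real.exp (-(γ * n)) ≤ Real.exp (-R * N) := by
    rw [← Real.exp_add, Real.exp_le_exp]
    nlinarith [mul_le_mul_of_nonneg_left hn hγ, mul_le_mul_of_nonneg_right h2 hN]
  calc _ ≤ 3 * Real.exp (R * N) * (2 * Real.exp (α * N) * Real.exp (-(β * k)) +
        2 * N * Real.exp (-(γ * n))) := by gcongr
    _ = 6 * (Real.exp (R * N) * (Real.exp (α * N) * Real.exp (-(β * k)))) +
        6 * (N * (Real.exp (R * N) * Real.exp (-(γ * n)))) := by ring
    _ ≤ 6 * (Real.exp β * Real.exp (-R * N)) + 6 * (N * Real.exp (-R * N)) := by gcongr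
    _ = _ := by ring

/-- **Achievability.** For a channel `Q` with positive synchronized capacity, every
asynchronism exponent `α` strictly below `max_x D(Q(·|x)‖Q(·|⋆))` (in `[0,∞]`; in
particular every finite exponent if `Q(y|⋆) = 0` for some `y`) is achievable: for
every `ε > 0` there are `R' > 0` and, for all sufficiently large `N`, a codebook
with `M ≥ e^{R'N}` codewords of length `N` and a sequential decoder such that, at
asynchronism level `A = ⌈e^{αN}⌉`, the error probability is at most `ε`. -/
theorem achievability [Fintype X] [Fintype Y] [Nonempty X]
    (Q : X → Y → ℝ) (star : X) (hQ : IsChannel Q)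
    (hfull : ∀ y : Y, ∃ x : X, 0 < Q x y) (hC : 0 < capacity Q)
    (α : ℝ) (hα0 : 0 ≤ α)
    (hα : ENNReal.ofReal α < ⨆ x : X, klDiv (Q x) (Q star))
    (ε : ℝ) (hε : 0 < ε) :
    ∃ R' : ℝ, 0 < R' ∧ ∃ N₀ : ℕ, ∀ N ≥ N₀, ∃ M : ℕ, 2 ≤ M ∧
      Real.exp (R' * N) ≤ (M : ℝ) ∧
      ∃ (c : Fin M → Fin N → X)
        (dec : Decoder Y (⌈Real.exp (α * N)⌉₊ + N - 1) M),
        errProb Q star c ⌈Real.exp (α * N)⌉₊ dec ≤ ε := by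
  classical
  obtain ⟨x, hx⟩ := lt_iSup_iff.1 hα
  obtain ⟨β, hαβ, hβ⟩ := exists_exponent hα0 hx
  obtain ⟨P, hP, hmi⟩ := exists_pos_mi Q hC
  obtain ⟨γ, hγ, hγmi⟩ := exists_between hmi
  have hβ0 : 0 < β := hα0.trans_lt hαβ
  obtain ⟨ρ₁, hρ₁0, hρ₁1, hρ₁⟩ := chernoff (Q x) (Q star) (hQ x) (hQ star).1 β hβ0.le hβ
  obtain ⟨ρ₂, hρ₂0, hρ₂1, hρ₂⟩ := info_density P hP Q hQ γ hγ.le hγmi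
  -- This choice gives `β (1 - δ) = (α + β) / 2`, half way between `α` and `β`.
  set δ : ℝ := (β - α) / (2 * β) with hδ
  have hδ0 : 0 < δ := div_pos (by linarith) (by linarith)
  have hδβ : β * (1 - δ) = (α + β) / 2 := by rw [hδ]; field_simp; ring
  have hδ1 : δ < 1 := by
    rw [hδ, div_lt_one (by linarith)]; linarith
  set R : ℝ := min (γ * δ / 2) ((β - α) / 4) with hRdef
  have hR : 0 < R := lt_min (by positivity) (by linarith)
  have hR1 : 2 * R ≤ γ * δ := by
    have := min_le_left (γ * δ / 2) ((β - α) / 4)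
    linarith
  have hR2 : α + 2 * R ≤ β * (1 - δ) := by
    have := min_le_right (γ * δ / 2) ((β - α) / 4)
    rw [hδβ]
    linarith
  have hcast : Filter.Tendsto (fun N : ℕ => (N : ℝ)) Filter.atTop Filter.atTop :=
    tendsto_natCast_atTop_atTop
  have hntop : Filter.Tendsto (fun N : ℕ => ⌈δ * N⌉₊) Filter.atTop Filter.atTop :=
    tendsto_nat_ceil_atTop.comp (hcast.const_mul_atTop hδ0)
  have hnle : ∀ N : ℕ, ⌈δ * N⌉₊ ≤ N := fun N =>
    Nat.ceil_le.2 (mul_le_of_le_one_left (Nat.cast_nonneg N) hδ1.le)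
  have hkge : ∀ N : ℕ, (1 - δ) * N - 1 ≤ ((N - ⌈δ * N⌉₊ : ℕ) : ℝ) := by
    intro N
    rw [Nat.cast_sub (hnle N)]
    have := Nat.ceil_lt_add_one (mul_nonneg hδ0.le (Nat.cast_nonneg N) : (0 : ℝ) ≤ δ * N)
    linarith
  have hktop : Filter.Tendsto (fun N : ℕ => N - ⌈δ * N⌉₊) Filter.atTop Filter.atTop := by
    refine tendsto_natCast_atTop_iff (R := ℝ).1 (Filter.tendsto_atTop_mono hkge ?_)
    exact Filter.tendsto_atTop_add_const_right _ (-1)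
      (hcast.const_mul_atTop (by linarith : 0 < 1 - δ))
  have hexp : Filter.Tendsto (fun N : ℕ => Real.exp (-R * N)) Filter.atTop (nhds 0) := by
    have := (tendsto_rpow_mul_exp_neg_mul_atTop_nhds_zero 0 R hR).comp hcast
    simpa [Function.comp_def] using this
  have hexp' : Filter.Tendsto (fun N : ℕ => (N : ℝ) * Real.exp (-R * N)) Filter.atTop (nhds 0) := by
    have := (tendsto_rpow_mul_exp_neg_mul_atTop_nhds_zero 1 R hR).comp hcast
    simpa [Function.comp_def] using this
  have hlim : Filter.Tendsto (fun N : ℕ => ρ₁ ^ (N - ⌈δ * N⌉₊) + ρ₂ ^ ⌈δ * N⌉₊ +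
      (6 * Real.exp β * Real.exp (-R * N) + 6 * (N * Real.exp (-R * N))))
      Filter.atTop (nhds 0) := by
    have h1 := (tendsto_pow_atTop_nhds_zero_of_lt_one hρ₁0 hρ₁1).comp hktop
    have h2 := (tendsto_pow_atTop_nhds_zero_of_lt_one hρ₂0 hρ₂1).comp hntop
    simpa [Function.comp_def] using
      (h1.add h2).add ((hexp.const_mul (6 * Real.exp β)).add (hexp'.const_mul 6))
  obtain ⟨N₀, hN₀⟩ := Filter.eventually_atTop.1 (hlim.eventually_lt_const hε)
  refine ⟨R, hR, N₀, fun N hN => ⟨⌈Real.exp (R * N)⌉₊ + 1, ?_, ?_, ?_⟩⟩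
  · have := Nat.ceil_pos.2 (Real.exp_pos (R * N))
    omega
  · have := Nat.le_ceil (Real.exp (R * N))
    push_cast
    linarith
  · have hsmall := hN₀ N hN
    have hn := Nat.le_ceil (δ * N)
    have hk := hkge N
    have hle := hnle N
    generalize ⌈δ * N⌉₊ = n at *
    obtain ⟨k, rfl⟩ : ∃ k, N = k + n := ⟨N - n, by omega⟩
    rw [Nat.add_sub_cancel] at hsmall hk
    obtain ⟨c, dec, hdec⟩ := exists_code P hP Q hQ star x β γ (ρ₁ ^ k) (ρ₂ ^ n) (hρ₁ k) (hρ₂ n)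
      (Nat.ceil_pos.2 (Real.exp_pos (α * (k + n : ℕ))))
      (Nat.succ_pos ⌈Real.exp (R * (k + n : ℕ))⌉₊)
    refine ⟨c, dec, hdec.trans ?_⟩
    have := union_bound hα0 hβ0.le hγ.le hR.le hR2 hR1 hn hk
    linarith

end Async
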